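/- arXiv:2605.08337 — 5 statements merged into one kernel-verified Lean document; each statement's English description precedes it below -/
import Mathlib

section
/- Let {G^a}_{a∈A} be a finite collection of operators on a nonzero finite-dimensional complex Hilbert space K. Then the minimum over tuples of complex numbers (c^a)_{a∈A} of ‖Σ_{a∈A} (G^a − c^a·I)†(G^a − c^a·I)‖_∞ equals the maximum over density matrices ρ on K of Σ_{a∈A} Var_ρ(G^a), and both extrema are attained. -/
open scoped BigOperators Kronecker Matrix ComplexOrder

noncomputable section
namespace Paper

/-- A density matrix: a positive semidefinite operator of trace one. -/
def IsDensityMatrix {n : Type*} [Fintype n] (ρ : Matrix n n ℂ) : Prop :=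
  ρ.PosSemidef ∧ ρ.trace = 1

/-- The operator norm `‖A‖_∞` (largest singular value) of a matrix,
as the operator norm of the induced map on Euclidean space. -/
noncomputable def opNorm {n : Type*} [Fintype n] [DecidableEq n] (A : Matrix n n ℂ) : ℝ :=
  ‖LinearMap.toContinuousLinearMap (Matrix.toEuclideanLin A)‖

/-- Von Neumann entropy `−∑ λ ln λ` over the eigenvalues; since `Real.log 0 = 0`
in Mathlib, the convention `0 · ln 0 = 0` is automatic. -/
noncomputable def entropy {n : Type*} [Fintype n] [DecidableEq n] (σ : Matrix n n ℂ) : ℝ :=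
  if h : σ.IsHermitian then -∑ i, h.eigenvalues i * Real.log (h.eigenvalues i) else 0

/-- The variance `Var_ρ(A) = Tr[ρ A† A] − |Tr[ρ A]|²`. -/
noncomputable def variance {n : Type*} [Fintype n] (ρ A : Matrix n n ℂ) : ℝ :=
  (ρ * (Aᴴ * A)).trace.re - ‖(ρ * A).trace‖ ^ 2

/-- The trace norm `‖A‖₁ = Tr √(A†A)`: the sum of the singular values. -/
noncomputable def traceNorm {n : Type*} [Fintype n] [DecidableEq n] (A : Matrix n n ℂ) : ℝ :=
  ∑ i, Real.sqrt ((Matrix.posSemidef_conjTranspose_mul_self A).1.eigenvalues i)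

/-- The pure state `|v⟩⟨v|` associated with a vector `v`. -/
def pureState {n : Type*} (v : n → ℂ) : Matrix n n ℂ :=
  Matrix.of fun x y => v x * (starRingEnd ℂ) (v y)

/-- The expectation value `⟨v|M|v⟩`. -/
noncomputable def expval {n : Type*} [Fintype n] (M : Matrix n n ℂ) (v : n → ℂ) : ℂ :=
  ∑ x, ∑ y, (starRingEnd ℂ) (v x) * M x y * v y

variable {N : ℕ} {d : Fin N → Type*} [∀ k, Fintype (d k)] [∀ k, DecidableEq (d k)]

/-- Extension of a local operator on the `k`-th factor to the `N`-fold tensor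
product `H = H_1 ⊗ ⋯ ⊗ H_N`, tensoring with the identity on every other factor.
(The tensor product is realized with index set `∀ j, d j`.) -/
def extendAt (k : Fin N) (A : Matrix (d k) (d k) ℂ) : Matrix (∀ j, d j) (∀ j, d j) ℂ :=
  Matrix.of fun x y => if ∀ j, j ≠ k → x j = y j then A (x k) (y k) else 0

/-- Reduced density matrix on the `k`-th factor: partial trace over all other factors. -/
noncomputable def reduce (k : Fin N) (ρ : Matrix (∀ j, d j) (∀ j, d j) ℂ) :
    Matrix (d k) (d k) ℂ :=
  Matrix.of fun a b => ∑ x : ∀ j, d j, if x k = a then ρ x (Function.update x k b) else 0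

/-- The normalized rank-one projection onto a nonzero vector is a density matrix. -/
theorem isDensityMatrix_smul_vecMulVec {n : Type*} [Fintype n] {x : n → ℂ} (hx : x ≠ 0) :
    IsDensityMatrix ((star x ⬝ᵥ x)⁻¹ • Matrix.vecMulVec x (star x)) := by
  refine ⟨(Matrix.posSemidef_vecMulVec_self_star x).smul
    (inv_nonneg.mpr (dotProduct_star_self_nonneg x)), ?_⟩
  rw [Matrix.trace_smul, Matrix.trace_vecMulVec, dotProduct_comm x, smul_eq_mul,
    inv_mul_cancel₀ (dotProduct_star_self_eq_zero.not.mpr hx)]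

section OperatorNorm

variable {n : Type*} [Fintype n] [DecidableEq n]

open scoped MatrixOrder Matrix.Norms.L2Operator in
theorem opNorm_le_iff_posSemidef_smul_one_sub {M : Matrix n n ℂ} (hM : M.PosSemidef) {r : ℝ}
    (hr : 0 ≤ r) : opNorm M ≤ r ↔ ((r : ℂ) • (1 : Matrix n n ℂ) - M).PosSemidef := by
  have h := CStarAlgebra.norm_le_iff_le_algebraMap M hr (Matrix.nonneg_iff_posSemidef.mpr hM)
  rw [Matrix.l2_opNorm_def, Matrix.le_iff, Algebra.algebraMap_eq_smul_one] at h
  rw [Complex.coe_smul]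
  exact h

open scoped MatrixOrder Matrix.Norms.L2Operator in
theorem posSemidef_exists_conjTranspose_mul_self {M : Matrix n n ℂ} (hM : M.PosSemidef) :
    ∃ B : Matrix n n ℂ, M = Bᴴ * B :=
  CStarAlgebra.nonneg_iff_eq_star_mul_self.mp (Matrix.nonneg_iff_posSemidef.mpr hM)

theorem re_trace_mul_nonneg {ρ M : Matrix n n ℂ} (hρ : ρ.PosSemidef) (hM : M.PosSemidef) :
    0 ≤ (ρ * M).trace.re := by
  obtain ⟨B, rfl⟩ := posSemidef_exists_conjTranspose_mul_self hρ
  rw [Matrix.mul_assoc, Matrix.trace_mul_comm]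
  exact (Complex.le_def.mp (hM.mul_mul_conjTranspose_same B).trace_nonneg).1

theorem re_trace_mul_le_opNorm {ρ M : Matrix n n ℂ} (hρ : IsDensityMatrix ρ)
    (hM : M.PosSemidef) : (ρ * M).trace.re ≤ opNorm M := by
  have h := re_trace_mul_nonneg hρ.1
    ((opNorm_le_iff_posSemidef_smul_one_sub hM (norm_nonneg _)).mp le_rfl)
  rw [Matrix.mul_sub, Matrix.trace_sub, Matrix.mul_smul, Matrix.mul_one, Matrix.trace_smul, hρ.2,
    smul_eq_mul, mul_one, Complex.sub_re, Complex.ofReal_re] at h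
  exact sub_nonneg.mp h

theorem opNorm_le_of_forall_re_trace_mul_le {M : Matrix n n ℂ} (hM : M.PosSemidef) {r : ℝ}
    (hr : 0 ≤ r) (h : ∀ ρ, IsDensityMatrix ρ → (ρ * M).trace.re ≤ r) : opNorm M ≤ r := by
  have hH : ((r : ℂ) • (1 : Matrix n n ℂ) - M).IsHermitian :=
    Matrix.IsHermitian.sub (by simp [Matrix.IsHermitian]) hM.1
  refine (opNorm_le_iff_posSemidef_smul_one_sub hM hr).mpr
    (.of_dotProduct_mulVec_nonneg hH fun x => ?_)
  rcases eq_or_ne x 0 with rfl | hx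
  · simp
  have hpos : 0 < star x ⬝ᵥ x := Matrix.dotProduct_star_self_pos_iff.mpr hx
  have hdens := h _ (isDensityMatrix_smul_vecMulVec hx)
  obtain ⟨s, hs⟩ : ∃ s : ℝ, star x ⬝ᵥ x = s := ⟨_, (Complex.eq_re_of_ofReal_le hpos.le)⟩
  rw [hs] at hpos hdens
  have hs0 : 0 < s := by exact_mod_cast hpos
  have hquad : 0 ≤ star x ⬝ᵥ (M *ᵥ x) := hM.dotProduct_mulVec_nonneg x
  obtain ⟨q, hq⟩ : ∃ q : ℝ, star x ⬝ᵥ (M *ᵥ x) = q := ⟨_, (Complex.eq_re_of_ofReal_le hquad)⟩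
  have hle : s⁻¹ * q ≤ r := by
    rw [Matrix.smul_mul, Matrix.trace_smul, Matrix.trace_mul_comm, Matrix.mul_vecMulVec,
      Matrix.trace_vecMulVec, dotProduct_comm, hq, smul_eq_mul] at hdens
    exact_mod_cast hdens
  rw [inv_mul_le_iff₀ hs0] at hle
  rw [Matrix.sub_mulVec, dotProduct_sub, Matrix.smul_mulVec, Matrix.one_mulVec, dotProduct_smul,
    hs, hq, smul_eq_mul]
  exact_mod_cast sub_nonneg.mpr (hle.trans_eq (mul_comm s r))

end OperatorNorm

section DensityMatrices

variable {n : Type*} [Fintype n]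

theorem setOf_isDensityMatrix_eq_image :
    {ρ : Matrix n n ℂ | IsDensityMatrix ρ} =
      (fun B : Matrix n n ℂ => Bᴴ * B) '' {B | (Bᴴ * B).trace = 1} := by
  classical
  ext ρ
  constructor
  · rintro ⟨hρ, htr⟩
    obtain ⟨B, rfl⟩ := posSemidef_exists_conjTranspose_mul_self hρ
    exact ⟨B, htr, rfl⟩
  · rintro ⟨B, hB, rfl⟩
    exact ⟨Matrix.posSemidef_conjTranspose_mul_self B, hB⟩

theorem trace_conjTranspose_mul_self_eq_sum_norm_sq (B : Matrix n n ℂ) :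
    (Bᴴ * B).trace = ((∑ j, ∑ i, ‖B i j‖ ^ 2 : ℝ) : ℂ) := by
  simp [Matrix.trace, Matrix.mul_apply, Complex.conj_mul']

theorem isCompact_setOf_isDensityMatrix : IsCompact {ρ : Matrix n n ℂ | IsDensityMatrix ρ} := by
  rw [setOf_isDensityMatrix_eq_image]
  refine IsCompact.image ?_ (by fun_prop)
  refine IsCompact.of_isClosed_subset (isCompact_univ_pi fun _ : n =>
    isCompact_univ_pi fun _ : n => isCompact_closedBall (0 : ℂ) 1)
    (isClosed_eq (by fun_prop) continuous_const) fun B hB i _ j _ => ?_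
  have hsum : ∑ j, ∑ i, ‖B i j‖ ^ 2 = 1 := by
    have h := trace_conjTranspose_mul_self_eq_sum_norm_sq B
    rw [show (Bᴴ * B).trace = 1 from hB] at h
    exact_mod_cast h.symm
  have hle : ‖B i j‖ ^ 2 ≤ 1 := calc
    ‖B i j‖ ^ 2 ≤ ∑ i, ‖B i j‖ ^ 2 :=
      Finset.single_le_sum (f := fun i => ‖B i j‖ ^ 2) (fun _ _ => by positivity)
        (Finset.mem_univ i)
    _ ≤ ∑ j, ∑ i, ‖B i j‖ ^ 2 :=
      Finset.single_le_sum (f := fun j => ∑ i, ‖B i j‖ ^ 2) (fun _ _ => by positivity)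
        (Finset.mem_univ j)
    _ = 1 := hsum
  simpa using (sq_le_one_iff₀ (norm_nonneg _)).mp hle

theorem exists_isDensityMatrix [Nonempty n] : ∃ ρ : Matrix n n ℂ, IsDensityMatrix ρ :=
  ⟨_, isDensityMatrix_smul_vecMulVec (one_ne_zero : (1 : n → ℂ) ≠ 0)⟩

theorem IsDensityMatrix.lineCombination {ρ σ : Matrix n n ℂ} (hρ : IsDensityMatrix ρ)
    (hσ : IsDensityMatrix σ) {t : ℝ} (ht0 : 0 ≤ t) (ht1 : t ≤ 1) :
    IsDensityMatrix (((1 - t : ℝ) : ℂ) • ρ + (t : ℂ) • σ) := by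
  refine ⟨(hρ.1.smul ?_).add (hσ.1.smul ?_), ?_⟩
  · exact_mod_cast sub_nonneg.mpr ht1
  · exact_mod_cast ht0
  · simp [hρ.2, hσ.2]

theorem trace_mul_conjTranspose {ρ : Matrix n n ℂ} (hρ : ρ.IsHermitian) (M : Matrix n n ℂ) :
    (ρ * Mᴴ).trace = star (ρ * M).trace := by
  rw [← Matrix.trace_conjTranspose, Matrix.conjTranspose_mul, hρ.eq, Matrix.trace_mul_comm]

theorem exists_isMaxOn_sum_variance [Nonempty n] {A : Type*} [Fintype A]
    (G : A → Matrix n n ℂ) :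
    ∃ ρ, IsDensityMatrix ρ ∧
      ∀ σ, IsDensityMatrix σ → ∑ a, variance σ (G a) ≤ ∑ a, variance ρ (G a) := by
  obtain ⟨ρ, hρ, hmax⟩ := isCompact_setOf_isDensityMatrix.exists_isMaxOn
    (exists_isDensityMatrix (n := n)) (f := fun σ => ∑ a, variance σ (G a))
    (by unfold variance; fun_prop)
  exact ⟨ρ, hρ, fun σ hσ => hmax hσ⟩

end DensityMatrices

section Variance

variable {n : Type*} [Fintype n] [DecidableEq n] {A : Type*} [Fintype A]

/-- The sum of the squared deviations of the operators `G a` from the scalars `c a`. -/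
def sqDeviation (G : A → Matrix n n ℂ) (c : A → ℂ) : Matrix n n ℂ :=
  ∑ a, (G a - c a • (1 : Matrix n n ℂ))ᴴ * (G a - c a • (1 : Matrix n n ℂ))

theorem sqDeviation_posSemidef (G : A → Matrix n n ℂ) (c : A → ℂ) :
    (sqDeviation G c).PosSemidef :=
  Matrix.posSemidef_sum _ fun _ _ => Matrix.posSemidef_conjTranspose_mul_self _

/-- Centering at `c` instead of at the mean increases the second moment by the squared distance
of `c` from the mean. -/
theorem re_trace_mul_centered_eq {ρ : Matrix n n ℂ} (hρ : IsDensityMatrix ρ) (M : Matrix n n ℂ)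
    (c : ℂ) :
    (ρ * ((M - c • (1 : Matrix n n ℂ))ᴴ * (M - c • (1 : Matrix n n ℂ)))).trace.re =
      variance ρ M + ‖(ρ * M).trace - c‖ ^ 2 := by
  have hstar := trace_mul_conjTranspose hρ.1.1 M
  simp only [variance, Matrix.conjTranspose_sub, Matrix.conjTranspose_smul,
    Matrix.conjTranspose_one, Matrix.sub_mul, Matrix.mul_sub, Matrix.smul_mul, Matrix.mul_smul,
    Matrix.one_mul, Matrix.mul_one, Matrix.trace_sub, Matrix.trace_smul, hstar, hρ.2,
    ← Complex.normSq_eq_norm_sq, Complex.normSq_apply]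
  simp
  ring

theorem re_trace_mul_sqDeviation_eq {ρ : Matrix n n ℂ} (hρ : IsDensityMatrix ρ)
    (G : A → Matrix n n ℂ) (c : A → ℂ) :
    (ρ * sqDeviation G c).trace.re =
      ∑ a, variance ρ (G a) + ∑ a, ‖(ρ * G a).trace - c a‖ ^ 2 := by
  simp only [sqDeviation, Matrix.mul_sum, Matrix.trace_sum, Complex.re_sum,
    re_trace_mul_centered_eq hρ, Finset.sum_add_distrib]

theorem sum_variance_le_opNorm_sqDeviation {ρ : Matrix n n ℂ} (hρ : IsDensityMatrix ρ)
    (G : A → Matrix n n ℂ) (c : A → ℂ) :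
    ∑ a, variance ρ (G a) ≤ opNorm (sqDeviation G c) := by
  have hle := re_trace_mul_le_opNorm hρ (sqDeviation_posSemidef G c)
  rw [re_trace_mul_sqDeviation_eq hρ] at hle
  have : 0 ≤ ∑ a, ‖(ρ * G a).trace - c a‖ ^ 2 := by positivity
  linarith

/-- First-order optimality: centering at the means of a maximizer `ρ` of the total variance, every
state has total second moment at most the total variance of `ρ`. -/
theorem re_trace_mul_sqDeviation_le_of_isMaxOn {G : A → Matrix n n ℂ} {ρ σ : Matrix n n ℂ}
    (hρ : IsDensityMatrix ρ) (hσ : IsDensityMatrix σ)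
    (hmax : ∀ σ, IsDensityMatrix σ → ∑ a, variance σ (G a) ≤ ∑ a, variance ρ (G a)) :
    (σ * sqDeviation G fun a => (ρ * G a).trace).trace.re ≤ ∑ a, variance ρ (G a) := by
  set M := sqDeviation G fun a => (ρ * G a).trace with hM
  set V := ∑ a, variance ρ (G a)
  set K := ∑ a, ‖(σ * G a).trace - (ρ * G a).trace‖ ^ 2
  have hρM : (ρ * M).trace.re = V := by simp [hM, re_trace_mul_sqDeviation_eq hρ, V]
  have hbound : ∀ t : ℝ, 0 < t → t ≤ 1 → (σ * M).trace.re ≤ V + t * K := by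
    intro t ht0 ht1
    have hτ := hρ.lineCombination hσ ht0.le ht1
    have heq := re_trace_mul_sqDeviation_eq hτ G fun a => (ρ * G a).trace
    have hdist : ∀ a, ‖((((1 - t : ℝ) : ℂ) • ρ + (t : ℂ) • σ) * G a).trace - (ρ * G a).trace‖ ^ 2 =
        t ^ 2 * ‖(σ * G a).trace - (ρ * G a).trace‖ ^ 2 := by
      intro a
      have : ((((1 - t : ℝ) : ℂ) • ρ + (t : ℂ) • σ) * G a).trace - (ρ * G a).trace =
          (t : ℂ) * ((σ * G a).trace - (ρ * G a).trace) := by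
        simp [Matrix.add_mul]
        ring
      rw [this, norm_mul, mul_pow, Complex.norm_real, Real.norm_eq_abs, sq_abs]
    have hlin : ((((1 - t : ℝ) : ℂ) • ρ + (t : ℂ) • σ) * M).trace.re =
        (1 - t) * V + t * (σ * M).trace.re := by
      rw [← hρM, Matrix.add_mul, Matrix.smul_mul, Matrix.smul_mul, Matrix.trace_add,
        Matrix.trace_smul, Matrix.trace_smul, Complex.add_re, smul_eq_mul, smul_eq_mul,
        Complex.re_ofReal_mul, Complex.re_ofReal_mul]
    rw [← hM, hlin, Finset.sum_congr rfl fun a _ => hdist a, ← Finset.mul_sum] at heq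
    have hle := hmax _ hτ
    refine le_of_mul_le_mul_left ?_ ht0
    linarith
  have hK : 0 ≤ K := by positivity
  refine le_of_forall_pos_le_add fun ε hε => ?_
  have hmin : min 1 (ε / (K + 1)) * K ≤ ε := calc
    _ ≤ ε / (K + 1) * (K + 1) := by gcongr; exacts [min_le_right _ _, by linarith]
    _ = ε := by field_simp
  linarith [hbound (min 1 (ε / (K + 1))) (by positivity) (min_le_left _ _)]

end Variance

/-- Lemma 8 of the paper, a minimax identity. For a finite collection
`{G^a}_{a∈A}` of operators on a nonzero finite-dimensional Hilbert space `K`, the minimum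
over tuples `(c^a)` of complex numbers of `‖Σ_a (G^a − c^a·I)†(G^a − c^a·I)‖_∞` equals the
maximum over density matrices `ρ` on `K` of `Σ_a Var_ρ(G^a)`, and both extrema are
attained. -/
theorem minimax_opNorm_eq_max_sum_variance
    {n : Type*} [Fintype n] [DecidableEq n] [Nonempty n]
    {A : Type*} [Fintype A] (G : A → Matrix n n ℂ) :
    ∃ V : ℝ,
      IsLeast {x : ℝ | ∃ c : A → ℂ,
        x = opNorm (∑ a, (G a - c a • (1 : Matrix n n ℂ))ᴴ *
          (G a - c a • (1 : Matrix n n ℂ)))} V ∧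
      IsGreatest {x : ℝ | ∃ ρ : Matrix n n ℂ,
        IsDensityMatrix ρ ∧ x = ∑ a, variance ρ (G a)} V := by
  obtain ⟨ρ, hρ, hmax⟩ := exists_isMaxOn_sum_variance G
  have hV : 0 ≤ ∑ a, variance ρ (G a) := by
    have h := re_trace_mul_nonneg hρ.1 (sqDeviation_posSemidef G fun a => (ρ * G a).trace)
    simpa [re_trace_mul_sqDeviation_eq hρ] using h
  refine ⟨∑ a, variance ρ (G a), ⟨⟨fun a => (ρ * G a).trace, ?_⟩, ?_⟩, ⟨ρ, hρ, rfl⟩, ?_⟩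
  · exact le_antisymm (sum_variance_le_opNorm_sqDeviation hρ G _)
      (opNorm_le_of_forall_re_trace_mul_le (sqDeviation_posSemidef G _) hV fun σ hσ =>
        re_trace_mul_sqDeviation_le_of_isMaxOn hρ hσ hmax)
  · rintro _ ⟨c, rfl⟩
    exact sum_variance_le_opNorm_sqDeviation hρ G c
  · rintro _ ⟨σ, hσ, rfl⟩
    exact hmax σ hσ

end Paper
end
end

section
/- Let ρ_{AB} be a density matrix on H_A ⊗ H_B with marginals ρ_A and ρ_B. Then the trace-norm distance of ρ_{AB} from the product of its marginals is bounded by the smaller single-system entropy: ‖ρ_{AB} − ρ_A ⊗ ρ_B‖₁ ≤ 2·√(min(s(ρ_A), s(ρ_B))). -/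
open scoped BigOperators Kronecker Matrix ComplexOrder

noncomputable section
namespace Paper

variable {N : ℕ} {d : Fin N → Type*} [∀ k, Fintype (d k)] [∀ k, DecidableEq (d k)]

/-- The marginal of a bipartite state on the first factor (partial trace over `H_B`). -/
noncomputable def margA {a b : Type*} [Fintype a] [Fintype b]
    (ρ : Matrix (a × b) (a × b) ℂ) : Matrix a a ℂ :=
  Matrix.of fun x y => ∑ z, ρ (x, z) (y, z)

/-- The marginal of a bipartite state on the second factor (partial trace over `H_A`). -/
noncomputable def margB {a b : Type*} [Fintype a] [Fintype b]
    (ρ : Matrix (a × b) (a × b) ℂ) : Matrix b b ℂ :=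
  Matrix.of fun x y => ∑ z, ρ (z, x) (z, y)

lemma trace_mul_conjTranspose_eq_sum_norm_sq {m n : Type*} [Fintype m] [Fintype n]
    (A : Matrix m n ℂ) :
    (A * Aᴴ).trace = ((∑ i, ∑ j, ‖A i j‖ ^ 2 : ℝ) : ℂ) := by
  simp [Matrix.trace, Matrix.mul_apply, Complex.mul_conj']

/-- The Cauchy–Schwarz inequality for finite complex sums. -/
lemma norm_sum_mul_sq_le {ι : Type*} [Fintype ι] (f g : ι → ℂ) :
    ‖∑ i, f i * g i‖ ^ 2 ≤ (∑ i, ‖f i‖ ^ 2) * ∑ i, ‖g i‖ ^ 2 := by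
  calc ‖∑ i, f i * g i‖ ^ 2 ≤ (∑ i, ‖f i‖ * ‖g i‖) ^ 2 := by
        gcongr
        exact (norm_sum_le _ _).trans_eq (by simp)
    _ ≤ _ := Finset.sum_mul_sq_le_sq_mul_sq _ _ _

lemma one_add_log_le_one_sub_log_mul_sq {p : ℝ} (hp : 0 < p) (hp1 : p ≤ 1) :
    1 + Real.log p ≤ (1 - Real.log p) * p ^ 2 := by
  have ht : Real.log p ≤ 0 := Real.log_nonpos hp.le hp1
  rcases le_or_gt (Real.log p) (-1) with h | h
  · nlinarith [sq_nonneg p]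
  have hlog := Real.sum_range_le_log_div (x := -Real.log p) (by linarith) (by linarith) 1
  simp only [Finset.sum_range_one, Nat.cast_zero, mul_zero, zero_add, pow_one, div_one] at hlog
  have hquot : Real.log ((1 + Real.log p) / (1 - Real.log p)) ≤ Real.log (p ^ 2) := by
    have hinv : (1 + Real.log p) / (1 - Real.log p)
        = ((1 + -Real.log p) / (1 - -Real.log p))⁻¹ := by
      rw [inv_div]; ring
    rw [hinv, Real.log_inv, Real.log_pow]
    push_cast
    linarith
  have hle := (Real.log_le_log_iff (div_pos (by linarith) (by linarith)) (by positivity)).1 hquot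
  rw [div_le_iff₀ (by linarith)] at hle
  linarith

lemma inv_add_sq_le {s p : ℝ} (hs : 0 < s) (hs1 : s ≤ 1) (hp : 0 < p) (hp1 : p ≤ 1) :
    (s + p ^ 2)⁻¹ ≤ (s - Real.log p) / (s * (1 + s)) := by
  have ht : Real.log p ≤ 0 := Real.log_nonpos hp.le hp1
  have h := one_add_log_le_one_sub_log_mul_sq hp hp1
  have hp2 : 0 < p ^ 2 := by positivity
  rw [inv_eq_one_div, div_le_div_iff₀ (by positivity) (by positivity)]
  rcases le_or_gt (1 + Real.log p) (p ^ 2) with h' | h'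
  · nlinarith [mul_nonneg hs.le (sub_nonneg.2 h'), mul_nonneg (neg_nonneg.2 ht) hp2.le]
  · nlinarith [mul_nonneg (sub_nonneg.2 hs1) (sub_nonneg.2 h'.le)]

/-- If the Shannon entropy of `p` is at most `s²`, then the secular function
`∑ pᵢ / (s + pᵢ²)` is at most one. -/
lemma sum_div_add_sq_le_one {ι : Type*} [Fintype ι] {p : ι → ℝ} (hp : ∀ i, 0 ≤ p i)
    (hsum : ∑ i, p i = 1) {s : ℝ} (hs : 0 < s)
    (hent : -∑ i, p i * Real.log (p i) ≤ s ^ 2) :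
    ∑ i, p i / (s + p i ^ 2) ≤ 1 := by
  rcases le_or_gt 1 s with h1 | h1
  · rw [← hsum]
    refine Finset.sum_le_sum fun i _ => div_le_self (hp i) ?_
    nlinarith [sq_nonneg (p i)]
  have hle : ∀ i, p i ≤ 1 := fun i =>
    hsum ▸ Finset.single_le_sum (fun j _ => hp j) (Finset.mem_univ i)
  calc ∑ i, p i / (s + p i ^ 2)
      ≤ ∑ i, (s * p i - p i * Real.log (p i)) / (s * (1 + s)) := by
        refine Finset.sum_le_sum fun i _ => ?_
        rcases (hp i).eq_or_lt with h0 | h0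
        · simp [← h0]
        · have := mul_le_mul_of_nonneg_left (inv_add_sq_le hs h1.le h0 (hle i)) (hp i)
          rw [div_eq_mul_inv]
          refine this.trans_eq ?_
          ring
    _ = (s - ∑ i, p i * Real.log (p i)) / (s * (1 + s)) := by
        rw [← Finset.sum_div, Finset.sum_sub_distrib, ← Finset.mul_sum, hsum, mul_one]
    _ ≤ 1 := by
        rw [div_le_one (by positivity)]
        nlinarith

/-- `|ψ⟩⟨ψ| ≤ s + ψ_A ⊗ ψ_N` tested on a vector, for a vector `ψ` with diagonal marginal
`ψ_A`; vectors of the tensor product are written as matrices. -/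
lemma norm_trace_sq_le_of_diagonal {a n : Type*} [Fintype a] [DecidableEq a] [Fintype n]
    {p : a → ℝ} (hp : ∀ i, 0 ≤ p i) {s : ℝ} (hs : 0 < s)
    (hsec : ∑ i, p i / (s + p i ^ 2) ≤ 1) (Ψ V : Matrix a n ℂ)
    (hΨ : Ψ * Ψᴴ = Matrix.diagonal (Complex.ofReal ∘ p)) :
    ‖(V * Ψᴴ).trace‖ ^ 2 ≤ s * (V * Vᴴ).trace.re
      + ((V * Ψᴴ)ᴴ * (Ψ * Ψᴴ) * (V * Ψᴴ)).trace.re := by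
  have hrow : ∀ i, ∑ z, ‖Ψ i z‖ ^ 2 = p i := fun i => by
    have h := congrFun (congrFun hΨ i) i
    simp only [Matrix.mul_apply, Matrix.conjTranspose_apply, RCLike.star_def, Complex.mul_conj',
      Matrix.diagonal_apply_eq, Function.comp_apply] at h
    exact_mod_cast h
  set M := V * Ψᴴ with hM
  have hdiag : ∀ i, ‖M i i‖ ^ 2 ≤ p i * ∑ z, ‖V i z‖ ^ 2 := fun i => by
    rw [hM, Matrix.mul_apply, ← hrow i, mul_comm]
    simpa using norm_sum_mul_sq_le (fun z => V i z) (fun z => Ψᴴ z i)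
  have htr : (Mᴴ * (Ψ * Ψᴴ) * M).trace.re = ∑ i, p i * ∑ j, ‖M i j‖ ^ 2 := by
    rw [Matrix.mul_assoc, Matrix.trace_mul_comm, hΨ, Matrix.mul_assoc]
    simp only [Matrix.trace, Matrix.diag_apply, Matrix.diagonal_mul, Function.comp_apply]
    simp only [Matrix.mul_apply, Matrix.conjTranspose_apply, RCLike.star_def, Complex.mul_conj']
    norm_cast
  rw [htr, trace_mul_conjTranspose_eq_sum_norm_sq, Complex.ofReal_re, Finset.mul_sum,
    ← Finset.sum_add_distrib]
  calc ‖M.trace‖ ^ 2 ≤ (∑ i, ‖M i i‖) ^ 2 := by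
        gcongr
        exact norm_sum_le _ _
    _ ≤ (∑ i, p i / (s + p i ^ 2)) * ∑ i, (s * ∑ z, ‖V i z‖ ^ 2 + p i * ‖M i i‖ ^ 2) := by
        refine Finset.sum_sq_le_sum_mul_sum_of_sq_le_mul _
          (fun i _ => div_nonneg (hp i) (by positivity))
          (fun i _ => add_nonneg (by positivity) (mul_nonneg (hp i) (by positivity)))
          fun i _ => ?_
        rw [div_mul_eq_mul_div, le_div_iff₀ (by positivity)]
        nlinarith [mul_le_mul_of_nonneg_left (hdiag i) hs.le]
    _ ≤ ∑ i, (s * ∑ z, ‖V i z‖ ^ 2 + p i * ‖M i i‖ ^ 2) :=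
        mul_le_of_le_one_left (Finset.sum_nonneg fun i _ =>
          add_nonneg (by positivity) (mul_nonneg (hp i) (by positivity))) hsec
    _ ≤ _ := by
        gcongr with i
        · exact hp i
        · exact Finset.single_le_sum (f := fun j => ‖M i j‖ ^ 2)
            (fun j _ => by positivity) (Finset.mem_univ i)

/-- A Hermitian matrix in the form `U D Uᴴ`. -/
lemma exists_unitary_diagonal {n : Type*} [Fintype n] [DecidableEq n] {A : Matrix n n ℂ}
    (hA : A.IsHermitian) :
    ∃ U : Matrix n n ℂ, Uᴴ * U = 1 ∧ U * Uᴴ = 1 ∧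
      A = U * Matrix.diagonal (Complex.ofReal ∘ hA.eigenvalues) * Uᴴ :=
  ⟨hA.eigenvectorUnitary, Unitary.coe_star_mul_self _, Unitary.coe_mul_star_self _,
    hA.spectral_theorem⟩

lemma norm_trace_sq_le {a n : Type*} [Fintype a] [DecidableEq a] [Fintype n]
    (Ψ V : Matrix a n ℂ) (htr : (Ψ * Ψᴴ).trace = 1) {s : ℝ} (hs : 0 < s)
    (hent : entropy (Ψ * Ψᴴ) ≤ s ^ 2) :
    ‖(V * Ψᴴ).trace‖ ^ 2 ≤ s * (V * Vᴴ).trace.re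
      + ((V * Ψᴴ)ᴴ * (Ψ * Ψᴴ) * (V * Ψᴴ)).trace.re := by
  have hpos := Matrix.posSemidef_self_mul_conjTranspose Ψ
  have hH := hpos.isHermitian
  rw [entropy, dif_pos hH] at hent
  have hsum : ∑ i, hH.eigenvalues i = 1 := by
    have h := hH.trace_eq_sum_eigenvalues
    rw [htr, ← RCLike.ofReal_sum] at h
    exact Complex.ofReal_injective (by simpa using h.symm)
  obtain ⟨U, hU, hU', hD⟩ := exists_unitary_diagonal hH
  have hcancel : ∀ X : Matrix a a ℂ, U * (Uᴴ * X) = X := fun X => by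
    rw [← Matrix.mul_assoc, hU', Matrix.one_mul]
  have hdiag : (Uᴴ * Ψ) * (Uᴴ * Ψ)ᴴ
      = Matrix.diagonal (Complex.ofReal ∘ hH.eigenvalues) := by
    calc (Uᴴ * Ψ) * (Uᴴ * Ψ)ᴴ = Uᴴ * ((Ψ * Ψᴴ) * U) := by
          simp [Matrix.conjTranspose_mul, Matrix.mul_assoc]
      _ = _ := by
          conv_lhs => rw [hD]
          simp only [Matrix.mul_assoc, hU, Matrix.mul_one]
          rw [← Matrix.mul_assoc, hU, Matrix.one_mul]
  have key := norm_trace_sq_le_of_diagonal hpos.eigenvalues_nonneg hs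
    (sum_div_add_sq_le_one hpos.eigenvalues_nonneg hsum hs hent) (Uᴴ * Ψ) (Uᴴ * V) hdiag
  have hconj : ∀ X : Matrix a a ℂ, (Uᴴ * (X * U)).trace = X.trace := fun X => by
    rw [Matrix.trace_mul_comm, Matrix.mul_assoc, hU', Matrix.mul_one]
  have h1 : Uᴴ * V * (Uᴴ * Ψ)ᴴ = Uᴴ * ((V * Ψᴴ) * U) := by
    simp [Matrix.conjTranspose_mul, Matrix.mul_assoc]
  have h2 : Uᴴ * V * (Uᴴ * V)ᴴ = Uᴴ * ((V * Vᴴ) * U) := by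
    simp [Matrix.conjTranspose_mul, Matrix.mul_assoc]
  have h3 : (Uᴴ * ((V * Ψᴴ) * U))ᴴ * (Uᴴ * Ψ * (Uᴴ * Ψ)ᴴ) * (Uᴴ * ((V * Ψᴴ) * U))
      = Uᴴ * (((V * Ψᴴ)ᴴ * (Ψ * Ψᴴ) * (V * Ψᴴ)) * U) := by
    have hψ : Uᴴ * Ψ * (Uᴴ * Ψ)ᴴ = Uᴴ * ((Ψ * Ψᴴ) * U) := by
      simp [Matrix.conjTranspose_mul, Matrix.mul_assoc]
    rw [hψ]
    generalize V * Ψᴴ = M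
    generalize Ψ * Ψᴴ = D
    simp [Matrix.conjTranspose_mul, Matrix.mul_assoc, hcancel]
  rwa [h1, h2, h3, hconj, hconj, hconj] at key

lemma trace_projection_mul_mul_conjTranspose {n m : Type*} [Fintype n] [Fintype m]
    {P : Matrix n n ℂ} (hP : P.IsHermitian) (hPP : P * P = P) (R : Matrix n m ℂ) :
    ((P * R) * (P * R)ᴴ).trace = (P * (R * Rᴴ)).trace := by
  rw [Matrix.conjTranspose_mul, hP.eq, ← Matrix.mul_assoc (P * R), Matrix.trace_mul_comm,
    ← Matrix.mul_assoc, ← Matrix.mul_assoc, hPP, Matrix.mul_assoc]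

/-- Expectation bound for a projection `P` fixing the columns of `V`. -/
lemma sum_norm_sq_le_of_mul_eq_self {n q r l : Type*} [Fintype n] [Fintype q] [Fintype r]
    [Fintype l] {P : Matrix n n ℂ} (hP : P.IsHermitian) (hPP : P * P = P) {V : Matrix n l ℂ}
    (hV : P * V = V) (R : Matrix n (q × r × l) ℂ) :
    ∑ i, ∑ j, ‖∑ k, (Rᴴ * V) (i, j, k) k‖ ^ 2
      ≤ (V * Vᴴ).trace.re * (P * (R * Rᴴ)).trace.re := by
  have hR : Rᴴ * V = (P * R)ᴴ * V := by
    rw [Matrix.conjTranspose_mul, hP.eq, Matrix.mul_assoc, hV]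
  have hterm : ∀ i j, ‖∑ k, (Rᴴ * V) (i, j, k) k‖ ^ 2
      ≤ (∑ k, ∑ x, ‖(P * R) x (i, j, k)‖ ^ 2) * ∑ x, ∑ k, ‖V x k‖ ^ 2 := fun i j => by
    have h := norm_sum_mul_sq_le (fun y : l × n => (P * R)ᴴ (i, j, y.1) y.2)
      (fun y : l × n => V y.2 y.1)
    rw [Finset.sum_comm (f := fun x k => ‖V x k‖ ^ 2)]
    simp only [hR, Matrix.mul_apply (M := (P * R)ᴴ)]
    simpa only [Fintype.sum_prod_type, Matrix.conjTranspose_apply, norm_star] using h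
  rw [← trace_projection_mul_mul_conjTranspose hP hPP, trace_mul_conjTranspose_eq_sum_norm_sq, trace_mul_conjTranspose_eq_sum_norm_sq,
    Complex.ofReal_re, Complex.ofReal_re, mul_comm,
    Finset.sum_comm (f := fun x y => ‖(P * R) x y‖ ^ 2)]
  simp only [Fintype.sum_prod_type]
  rw [Finset.sum_mul]
  refine Finset.sum_le_sum fun i _ => ?_
  rw [Finset.sum_mul]
  exact Finset.sum_le_sum fun j _ => hterm i j

open scoped MatrixOrder Matrix.Norms.L2Operator in
lemma exists_eq_mul_conjTranspose {n : Type*} [Fintype n] [DecidableEq n] {A : Matrix n n ℂ}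
    (hA : A.PosSemidef) : ∃ B : Matrix n n ℂ, A = B * Bᴴ := by
  obtain ⟨B, hB⟩ := CStarAlgebra.nonneg_iff_eq_star_mul_self.mp hA.nonneg
  exact ⟨Bᴴ, by simpa [Matrix.star_eq_conjTranspose] using hB⟩

/-- The bias of a projective test between `ρ` and the product of its
marginals. -/
lemma trace_mul_sub_le_of_entropy_le_sq {a b : Type*} [Fintype a] [DecidableEq a] [Fintype b]
    [DecidableEq b] {ρ : Matrix (a × b) (a × b) ℂ} (hρ : IsDensityMatrix ρ)
    {P : Matrix (a × b) (a × b) ℂ} (hP : P.IsHermitian) (hPP : P * P = P) {s : ℝ} (hs : 0 < s)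
    (hent : entropy (margA ρ) ≤ s ^ 2) :
    (P * (ρ - margA ρ ⊗ₖ margB ρ)).trace.re ≤ s := by
  obtain ⟨hpos, htr⟩ := hρ
  obtain ⟨Y, hY⟩ := exists_eq_mul_conjTranspose hpos
  let rowsA : Matrix (a × b) (a × b) ℂ → Matrix a (b × (a × b)) ℂ :=
    fun Z => Matrix.of fun x y => Z (x, y.1) y.2
  let Ψ := rowsA Y
  let Ψ' : Matrix b (a × (a × b)) ℂ := Matrix.of fun x y => Y (y.1, x) y.2
  let V := rowsA (P * Y)
  have hA : margA ρ = Ψ * Ψᴴ := by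
    ext x y
    simp [hY, margA, Ψ, rowsA, Matrix.mul_apply, Fintype.sum_prod_type]
  have hB : margB ρ = Ψ' * Ψ'ᴴ := by
    ext x y
    simp [hY, margB, Ψ', Matrix.mul_apply, Fintype.sum_prod_type]
  have hinner : ∀ Z W, (rowsA Z * (rowsA W)ᴴ).trace = (Z * Wᴴ).trace := fun Z W => by
    simp [rowsA, Matrix.trace, Matrix.mul_apply, Fintype.sum_prod_type]
  have hVΨ : (V * Ψᴴ).trace = (P * ρ).trace := by
    rw [hinner, hY, Matrix.mul_assoc]
  have hnorm : ((P * Y) * (P * Y)ᴴ).trace = (P * ρ).trace := by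
    rw [trace_projection_mul_mul_conjTranspose hP hPP, hY]
  have hVV : (V * Vᴴ).trace = (P * ρ).trace := (hinner _ _).trans hnorm
  have hΨ1 : (Ψ * Ψᴴ).trace = 1 := by rw [hinner, ← hY, htr]
  have hpure := norm_trace_sq_le Ψ V hΨ1 hs (hA ▸ hent)
  have hRR : (Ψ ⊗ₖ Ψ') * (Ψ ⊗ₖ Ψ')ᴴ = margA ρ ⊗ₖ margB ρ := by
    rw [Matrix.conjTranspose_kronecker, ← Matrix.mul_kronecker_mul, hA, hB]
  have hproj := sum_norm_sq_le_of_mul_eq_self hP hPP (V := P * Y)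
    (by rw [← Matrix.mul_assoc, hPP]) (Ψ ⊗ₖ Ψ')
  rw [hRR, hnorm] at hproj
  have hT : ((V * Ψᴴ)ᴴ * (Ψ * Ψᴴ) * (V * Ψᴴ)).trace.re
      = ∑ i, ∑ j, ‖∑ k, ((Ψ ⊗ₖ Ψ')ᴴ * (P * Y)) (i, j, k) k‖ ^ 2 := by
    have h1 : ((V * Ψᴴ)ᴴ * (Ψ * Ψᴴ) * (V * Ψᴴ)).trace
        = ((Ψᴴ * (V * Ψᴴ)) * (Ψᴴ * (V * Ψᴴ))ᴴ).trace := by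
      rw [Matrix.trace_mul_comm (Ψᴴ * (V * Ψᴴ))]
      simp [Matrix.conjTranspose_mul, Matrix.mul_assoc]
    rw [h1, trace_mul_conjTranspose_eq_sum_norm_sq, Complex.ofReal_re]
    refine Finset.sum_congr rfl fun i _ => Finset.sum_congr rfl fun j _ => ?_
    congr 2
    rw [← Matrix.mul_assoc, Matrix.mul_apply, Fintype.sum_prod_type, Finset.sum_comm]
    refine Finset.sum_congr rfl fun k _ => ?_
    simp only [Matrix.mul_apply (M := (Ψ ⊗ₖ Ψ')ᴴ), Matrix.mul_apply (M := Ψᴴ),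
      Fintype.sum_prod_type (α₁ := a), Finset.sum_mul]
    rw [Finset.sum_comm]
    refine Finset.sum_congr rfl fun x _ => Finset.sum_congr rfl fun w _ => ?_
    simp only [V, Ψ, Ψ', rowsA, Matrix.conjTranspose_apply, Matrix.of_apply,
      Matrix.kroneckerMap_apply, star_mul']
    ring
  have hxnonneg : 0 ≤ (P * ρ).trace.re := by
    rw [← hnorm, trace_mul_conjTranspose_eq_sum_norm_sq, Complex.ofReal_re]
    positivity
  have hynonneg : 0 ≤ (P * (margA ρ ⊗ₖ margB ρ)).trace.re := by
    have h := (Matrix.posSemidef_self_mul_conjTranspose (P * (Ψ ⊗ₖ Ψ'))).trace_nonneg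
    rw [trace_projection_mul_mul_conjTranspose hP hPP, hRR] at h
    exact (Complex.le_def.1 h).1
  have habs : (P * ρ).trace.re ^ 2 ≤ ‖(P * ρ).trace‖ ^ 2 :=
    sq_le_sq.2 ((Complex.abs_re_le_norm _).trans (le_abs_self _))
  rw [hVΨ, hVV, hT] at hpure
  rw [Matrix.mul_sub, Matrix.trace_sub, Complex.sub_re]
  rcases hxnonneg.eq_or_lt with h0 | h0
  · linarith
  · have : (P * ρ).trace.re * (P * ρ).trace.re
        ≤ (P * ρ).trace.re * (s + (P * (margA ρ ⊗ₖ margB ρ)).trace.re) := by nlinarith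
    have := le_of_mul_le_mul_left this h0
    linarith

lemma trace_mul_sub_le_sqrt_entropy_margA {a b : Type*} [Fintype a] [DecidableEq a] [Fintype b]
    [DecidableEq b] {ρ : Matrix (a × b) (a × b) ℂ} (hρ : IsDensityMatrix ρ)
    {P : Matrix (a × b) (a × b) ℂ} (hP : P.IsHermitian) (hPP : P * P = P) :
    (P * (ρ - margA ρ ⊗ₖ margB ρ)).trace.re ≤ Real.sqrt (entropy (margA ρ)) := by
  refine le_of_forall_gt_imp_ge_of_dense fun s hs => ?_
  have hs0 : 0 < s := (Real.sqrt_nonneg _).trans_lt hs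
  exact trace_mul_sub_le_of_entropy_le_sq hρ hP hPP hs0 ((Real.sqrt_lt' hs0).1 hs).le

lemma trace_mul_sub_le_sqrt_entropy_margB {a b : Type*} [Fintype a] [DecidableEq a] [Fintype b]
    [DecidableEq b] {ρ : Matrix (a × b) (a × b) ℂ} (hρ : IsDensityMatrix ρ)
    {P : Matrix (a × b) (a × b) ℂ} (hP : P.IsHermitian) (hPP : P * P = P) :
    (P * (ρ - margA ρ ⊗ₖ margB ρ)).trace.re ≤ Real.sqrt (entropy (margB ρ)) := by
  let e := Equiv.prodComm b a
  have htrace : ∀ X : Matrix (a × b) (a × b) ℂ, (X.submatrix e e).trace = X.trace := fun X =>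
    Fintype.sum_equiv e _ _ fun _ => rfl
  have hA : margA (ρ.submatrix e e) = margB ρ := rfl
  have hB : margB (ρ.submatrix e e) = margA ρ := rfl
  have h := trace_mul_sub_le_sqrt_entropy_margA (ρ := ρ.submatrix e e)
    ⟨hρ.1.submatrix e, (htrace ρ).trans hρ.2⟩ (P := P.submatrix e e) (hP.submatrix e)
    (by rw [Matrix.submatrix_mul_equiv, hPP])
  have hsub : ρ.submatrix e e - margB ρ ⊗ₖ margA ρ
      = (ρ - margA ρ ⊗ₖ margB ρ).submatrix e e := by
    ext x y
    simp [e, mul_comm]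
  rwa [hA, hB, hsub, Matrix.submatrix_mul_equiv, htrace] at h

/-- The trace norm of a Hermitian matrix is the sum of the absolute values of its eigenvalues. -/
lemma traceNorm_eq_sum_abs_eigenvalues {n : Type*} [Fintype n] [DecidableEq n]
    {A : Matrix n n ℂ} (hA : A.IsHermitian) : traceNorm A = ∑ i, |hA.eigenvalues i| := by
  have hAA := (Matrix.posSemidef_conjTranspose_mul_self A).1
  obtain ⟨U, hU, -, hD⟩ := exists_unitary_diagonal hA
  have hsq : Aᴴ * A
      = U * (Matrix.diagonal (fun i => ((hA.eigenvalues i ^ 2 : ℝ) : ℂ)) * Uᴴ) := by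
    rw [hA.eq]
    conv_lhs => rw [hD]
    simp only [Matrix.mul_assoc]
    rw [← Matrix.mul_assoc Uᴴ U, hU, Matrix.one_mul, ← Matrix.mul_assoc (Matrix.diagonal _),
      Matrix.diagonal_mul_diagonal]
    simp [pow_two]
  have hchar : (Aᴴ * A).charpoly
      = (Matrix.diagonal (fun i => ((hA.eigenvalues i ^ 2 : ℝ) : ℂ))).charpoly := by
    rw [hsq, Matrix.charpoly_mul_comm, Matrix.mul_assoc, hU, Matrix.mul_one]
  have hroots : (Aᴴ * A).charpoly.roots
      = Multiset.map (fun i => ((hA.eigenvalues i ^ 2 : ℝ) : ℂ)) Finset.univ.val := by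
    rw [hchar, Matrix.charpoly_diagonal, Polynomial.roots_prod]
    · simp only [Polynomial.roots_X_sub_C, Multiset.bind_singleton]
    · exact Finset.prod_ne_zero_iff.2 fun i _ => Polynomial.X_sub_C_ne_zero _
  rw [hAA.roots_charpoly_eq_eigenvalues] at hroots
  have h := congrArg (fun m => (m.map fun z : ℂ => Real.sqrt z.re).sum) hroots
  simpa [Multiset.map_map, Real.sqrt_sq_eq_abs, traceNorm, Function.comp_def,
    ← Complex.ofReal_pow] using h

/-- A bound on all projective tests bounds the trace norm of a traceless Hermitian matrix. -/
lemma traceNorm_le_of_forall_projection {n : Type*} [Fintype n] [DecidableEq n]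
    {A : Matrix n n ℂ} (hA : A.IsHermitian) (htr : A.trace = 0) {c : ℝ}
    (h : ∀ P : Matrix n n ℂ, P.IsHermitian → P * P = P → (P * A).trace.re ≤ c) :
    traceNorm A ≤ 2 * c := by
  obtain ⟨U, hU, -, hD⟩ := exists_unitary_diagonal hA
  let d : n → ℂ := fun i => if 0 < hA.eigenvalues i then 1 else 0
  have hcancel : ∀ X : Matrix n n ℂ, Uᴴ * (U * X) = X := fun X => by
    rw [← Matrix.mul_assoc, hU, Matrix.one_mul]
  have hdd : ∀ i, d i * d i = d i := fun i => by simp [d]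
  have hbound := h (U * (Matrix.diagonal d * Uᴴ))
    (by
      have hd : star d = d := by
        ext i
        simp [d, apply_ite]
      simp [Matrix.IsHermitian, Matrix.conjTranspose_mul, Matrix.mul_assoc,
        Matrix.diagonal_conjTranspose, hd])
    (by
      simp only [Matrix.mul_assoc, hcancel]
      rw [← Matrix.mul_assoc (Matrix.diagonal d), Matrix.diagonal_mul_diagonal]
      simp [hdd])
  have hprod : (U * (Matrix.diagonal d * Uᴴ) * A).trace
      = ((∑ i, max (hA.eigenvalues i) 0 : ℝ) : ℂ) := by
    conv_lhs => rw [hD]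
    simp only [Matrix.mul_assoc, hcancel]
    rw [Matrix.trace_mul_comm, ← Matrix.mul_assoc (Matrix.diagonal d), Matrix.mul_assoc, hU,
      Matrix.mul_one, Matrix.diagonal_mul_diagonal, Matrix.trace_diagonal, Complex.ofReal_sum]
    refine Finset.sum_congr rfl fun i _ => ?_
    by_cases hi : 0 < hA.eigenvalues i
    · simp [d, hi, hi.le]
    · simp [d, hi, not_lt.1 hi]
  rw [hprod, Complex.ofReal_re] at hbound
  have hsum : ∑ i, hA.eigenvalues i = 0 := by
    have h := hA.trace_eq_sum_eigenvalues
    rw [htr, ← RCLike.ofReal_sum] at h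
    exact Complex.ofReal_injective (by simpa using h.symm)
  have habs : ∀ x : ℝ, |x| = 2 * max x 0 - x := fun x => by
    rcases le_total x 0 with hx | hx
    · rw [abs_of_nonpos hx, max_eq_right hx]; ring
    · rw [abs_of_nonneg hx, max_eq_left hx]; ring
  rw [traceNorm_eq_sum_abs_eigenvalues hA]
  simp only [habs]
  rw [Finset.sum_sub_distrib, hsum, ← Finset.mul_sum]
  linarith

lemma isHermitian_sub_prod_marginals {a b : Type*} [Fintype a] [Fintype b]
    {ρ : Matrix (a × b) (a × b) ℂ} (hρ : ρ.IsHermitian) :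
    (ρ - margA ρ ⊗ₖ margB ρ).IsHermitian := by
  have hA : (margA ρ)ᴴ = margA ρ := by
    ext x y
    simp [margA, hρ.apply]
  have hB : (margB ρ)ᴴ = margB ρ := by
    ext x y
    simp [margB, hρ.apply]
  rw [Matrix.IsHermitian, Matrix.conjTranspose_sub, Matrix.conjTranspose_kronecker, hρ.eq, hA, hB]

lemma trace_sub_prod_marginals {a b : Type*} [Fintype a] [Fintype b]
    {ρ : Matrix (a × b) (a × b) ℂ} (hρ : ρ.trace = 1) :
    (ρ - margA ρ ⊗ₖ margB ρ).trace = 0 := by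
  have hA : (margA ρ).trace = ρ.trace := by
    simp [margA, Matrix.trace, Fintype.sum_prod_type]
  have hB : (margB ρ).trace = ρ.trace := by
    simp [margB, Matrix.trace, Fintype.sum_prod_type_right]
  rw [Matrix.trace_sub, Matrix.trace_kronecker, hA, hB, hρ]
  ring

/-- For a density matrix `ρ_{AB}` on `H_A ⊗ H_B` with marginals `ρ_A`
and `ρ_B`, the trace-norm distance from the product of its marginals is bounded by the
smaller single-system entropy: `‖ρ_{AB} − ρ_A ⊗ ρ_B‖₁ ≤ 2·√(min(s(ρ_A), s(ρ_B)))`. -/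
theorem traceNorm_sub_prod_marginals_le
    {a b : Type*} [Fintype a] [DecidableEq a] [Nonempty a]
    [Fintype b] [DecidableEq b] [Nonempty b]
    (ρ : Matrix (a × b) (a × b) ℂ) (hρ : IsDensityMatrix ρ) :
    traceNorm (ρ - margA ρ ⊗ₖ margB ρ) ≤
      2 * Real.sqrt (min (entropy (margA ρ)) (entropy (margB ρ))) := by
  refine traceNorm_le_of_forall_projection (isHermitian_sub_prod_marginals hρ.1.isHermitian)
    (trace_sub_prod_marginals hρ.2) fun P hP hPP => ?_
  rcases le_total (entropy (margA ρ)) (entropy (margB ρ)) with h | h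
  · rw [min_eq_left h]
    exact trace_mul_sub_le_sqrt_entropy_margA hρ hP hPP
  · rw [min_eq_right h]
    exact trace_mul_sub_le_sqrt_entropy_margB hρ hP hPP

end Paper
end
end

section
/- Let A be a Hermitian operator on a nonzero finite-dimensional complex Hilbert space K, with largest eigenvalue λmax and smallest eigenvalue λmin. Then the maximum over all density matrices ρ on K of the variance Var_ρ(A) = Tr[ρ A²] − (Tr[ρ A])² exists and equals (λmax − λmin)²/4; in particular it is attained by the pure state (|λmin⟩ + |λmax⟩)/√2 built from unit eigenvectors for λmin and λmax. -/
open scoped BigOperators Kronecker Matrix ComplexOrder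

noncomputable section
namespace Paper

variable {N : ℕ} {d : Fin N → Type*} [∀ k, Fintype (d k)] [∀ k, DecidableEq (d k)]

/-- Variance of a Hermitian operator in a state: `Var_ρ(A) = Tr[ρ A²] − (Tr[ρ A])²`. -/
noncomputable def varH {n : Type*} [Fintype n] (ρ A : Matrix n n ℂ) : ℝ :=
  (ρ * (A * A)).trace.re - ((ρ * A).trace.re) ^ 2

theorem trace_mul_pow_eq_sum_eigenvalues {n : Type*} [Fintype n] [DecidableEq n]
    {A : Matrix n n ℂ} (hA : A.IsHermitian) (ρ : Matrix n n ℂ) (k : ℕ) :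
    (ρ * A ^ k).trace = ∑ i, ((hA.eigenvectorUnitary : Matrix n n ℂ)ᴴ * ρ *
      (hA.eigenvectorUnitary : Matrix n n ℂ)) i i * (hA.eigenvalues i : ℂ) ^ k := by
  conv_lhs => rw [hA.spectral_theorem]
  rw [← map_pow, Matrix.diagonal_pow, Unitary.conjStarAlgAut_apply, ← mul_assoc,
    Matrix.trace_mul_comm, ← mul_assoc, ← mul_assoc]
  simp [Matrix.trace, Matrix.mul_diagonal, Matrix.star_eq_conjTranspose]

/-- The **Bhatia–Davis inequality** for the variance of a Hermitian operator in a state. -/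
theorem varH_le_mul_sub {n : Type*} [Fintype n] [DecidableEq n]
    {A ρ : Matrix n n ℂ} (hA : A.IsHermitian) (hρ : IsDensityMatrix ρ) {a b : ℝ}
    (ha : ∀ i, a ≤ hA.eigenvalues i) (hb : ∀ i, hA.eigenvalues i ≤ b) :
    varH ρ A ≤ (b - (ρ * A).trace.re) * ((ρ * A).trace.re - a) := by
  set p : n → ℝ := fun i => (((hA.eigenvectorUnitary : Matrix n n ℂ)ᴴ * ρ *
      (hA.eigenvectorUnitary : Matrix n n ℂ)) i i).re
  have hp i : 0 ≤ p i := (Complex.nonneg_iff.1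
    (hρ.1.conjTranspose_mul_mul_same (hA.eigenvectorUnitary : Matrix n n ℂ)).diag_nonneg).1
  have moment k : (ρ * A ^ k).trace.re = ∑ i, p i * hA.eigenvalues i ^ k := by
    rw [trace_mul_pow_eq_sum_eigenvalues hA, Complex.re_sum]
    refine Finset.sum_congr rfl fun i _ => ?_
    rw [← Complex.ofReal_pow, Complex.re_mul_ofReal]
  have h0 : 1 = ∑ i, p i := by simpa [hρ.2] using moment 0
  have h1 : (ρ * A).trace.re = ∑ i, p i * hA.eigenvalues i := by simpa using moment 1
  have h2 : (ρ * (A * A)).trace.re = ∑ i, p i * hA.eigenvalues i ^ 2 := by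
    simpa [sq] using moment 2
  have key : 0 ≤ ∑ i, p i * ((b - hA.eigenvalues i) * (hA.eigenvalues i - a)) :=
    Finset.sum_nonneg fun i _ => mul_nonneg (hp i)
      (mul_nonneg (sub_nonneg.2 (hb i)) (sub_nonneg.2 (ha i)))
  have expand : ∑ i, p i * ((b - hA.eigenvalues i) * (hA.eigenvalues i - a)) =
      (a + b) * (∑ i, p i * hA.eigenvalues i) - (∑ i, p i * hA.eigenvalues i ^ 2)
        - a * b * ∑ i, p i := by
    simp only [Finset.mul_sum, ← Finset.sum_sub_distrib]
    exact Finset.sum_congr rfl fun i _ => by ring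
  rw [expand, ← h0, ← h1, ← h2] at key
  unfold varH
  linarith

theorem pureState_eq_vecMulVec {n : Type*} (v : n → ℂ) :
    pureState v = Matrix.vecMulVec v (star v) := rfl

theorem trace_pureState_mul {n : Type*} [Fintype n] (v : n → ℂ) (B : Matrix n n ℂ) :
    (pureState v * B).trace = star v ⬝ᵥ B *ᵥ v := by
  rw [pureState_eq_vecMulVec, Matrix.vecMulVec_mul, Matrix.trace_vecMulVec, dotProduct_comm,
    Matrix.dotProduct_mulVec]

theorem isDensityMatrix_pureState {n : Type*} [Fintype n] {v : n → ℂ} (hv : star v ⬝ᵥ v = 1) :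
    IsDensityMatrix (pureState v) := by
  refine ⟨Matrix.posSemidef_vecMulVec_self_star v, ?_⟩
  rw [pureState_eq_vecMulVec, Matrix.trace_vecMulVec, dotProduct_comm, hv]

theorem isDensityMatrix_midpoint {n : Type*} [Fintype n] {ρ σ : Matrix n n ℂ}
    (hρ : IsDensityMatrix ρ) (hσ : IsDensityMatrix σ) :
    IsDensityMatrix ((2⁻¹ : ℂ) • (ρ + σ)) := by
  refine ⟨(hρ.1.add hσ.1).smul (by simp), ?_⟩
  rw [Matrix.trace_smul, Matrix.trace_add, hρ.2, hσ.2]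
  norm_num

theorem mul_self_mulVec_of_eigenvector {n : Type*} [Fintype n] {A : Matrix n n ℂ} {v : n → ℂ}
    {c : ℂ} (h : A *ᵥ v = c • v) : (A * A) *ᵥ v = c ^ 2 • v := by
  rw [← Matrix.mulVec_mulVec, h, Matrix.mulVec_smul, h, smul_smul, sq]

theorem varH_midpoint_pureState {n : Type*} [Fintype n] {A : Matrix n n ℂ} {v w : n → ℂ}
    {a b : ℝ} (hv : star v ⬝ᵥ v = 1) (hw : star w ⬝ᵥ w = 1)
    (hAv : A *ᵥ v = (a : ℂ) • v) (hAw : A *ᵥ w = (b : ℂ) • w) :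
    varH ((2⁻¹ : ℂ) • (pureState v + pureState w)) A = (b - a) ^ 2 / 4 := by
  have h1 : (((2⁻¹ : ℂ) • (pureState v + pureState w)) * A).trace = ((2⁻¹ * (a + b) : ℝ) : ℂ) := by
    simp [Matrix.add_mul, trace_pureState_mul, hAv, hAw, hv, hw, mul_add]
  have h2 : (((2⁻¹ : ℂ) • (pureState v + pureState w)) * (A * A)).trace =
      ((2⁻¹ * (a ^ 2 + b ^ 2) : ℝ) : ℂ) := by
    simp [Matrix.add_mul, trace_pureState_mul, mul_self_mulVec_of_eigenvector hAv,
      mul_self_mulVec_of_eigenvector hAw, hv, hw, mul_add]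
  rw [varH, h1, h2, Complex.ofReal_re, Complex.ofReal_re]
  ring

theorem varH_pureState_superposition {n : Type*} [Fintype n] {A : Matrix n n ℂ} {v w : n → ℂ}
    {a b : ℝ} (hv : star v ⬝ᵥ v = 1) (hw : star w ⬝ᵥ w = 1)
    (hAv : A *ᵥ v = (a : ℂ) • v) (hAw : A *ᵥ w = (b : ℂ) • w) (hvw : star v ⬝ᵥ w = 0) :
    varH (pureState (((Real.sqrt 2 : ℂ))⁻¹ • (v + w))) A = (b - a) ^ 2 / 4 := by
  have hwv : star w ⬝ᵥ v = 0 := by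
    rw [Matrix.star_dotProduct, hvw, star_zero]
  have hc : ((Real.sqrt 2 : ℂ))⁻¹ * ((Real.sqrt 2 : ℂ))⁻¹ = 2⁻¹ := by
    rw [← mul_inv, ← Complex.ofReal_mul, Real.mul_self_sqrt zero_le_two, Complex.ofReal_ofNat]
  have hB {B : Matrix n n ℂ} {s t : ℝ} (hBv : B *ᵥ v = (s : ℂ) • v) (hBw : B *ᵥ w = (t : ℂ) • w) :
      (pureState (((Real.sqrt 2 : ℂ))⁻¹ • (v + w)) * B).trace = ((2⁻¹ * (s + t) : ℝ) : ℂ) := by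
    have hstar : star ((Real.sqrt 2 : ℂ))⁻¹ = ((Real.sqrt 2 : ℂ))⁻¹ := by simp
    rw [trace_pureState_mul, Matrix.mulVec_smul, Matrix.mulVec_add, hBv, hBw, star_smul, hstar,
      smul_dotProduct, dotProduct_smul, smul_smul, hc]
    simp [hv, hw, hvw, hwv]
  rw [varH, hB hAv hAw,
    hB (s := a ^ 2) (t := b ^ 2) (by simpa using mul_self_mulVec_of_eigenvector hAv)
      (by simpa using mul_self_mulVec_of_eigenvector hAw), Complex.ofReal_re, Complex.ofReal_re]
  ring

theorem exists_unit_eigenvector {n : Type*} [Fintype n] [DecidableEq n] {A : Matrix n n ℂ}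
    (hA : A.IsHermitian) (i : n) :
    ∃ v : n → ℂ, star v ⬝ᵥ v = 1 ∧ A *ᵥ v = (hA.eigenvalues i : ℂ) • v := by
  refine ⟨hA.eigenvectorBasis i, ?_, by simpa using hA.mulVec_eigenvectorBasis i⟩
  rw [dotProduct_comm, ← EuclideanSpace.inner_eq_star_dotProduct, inner_self_eq_norm_sq_to_K,
    hA.eigenvectorBasis.orthonormal.1 i]
  simp

theorem star_dotProduct_self_eq_one {n : Type*} [Fintype n] {v : n → ℂ}
    (hv : ∑ x, Complex.normSq (v x) = 1) : star v ⬝ᵥ v = 1 := by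
  rw [← Complex.ofReal_one, ← hv, Complex.ofReal_sum]
  exact Finset.sum_congr rfl fun x _ => (Complex.normSq_eq_conj_mul_self).symm

/-- For a Hermitian operator `A` with largest eigenvalue `λmax` and
smallest eigenvalue `λmin`, the maximum over density matrices of `Var_ρ(A)` exists and
equals `(λmax − λmin)²/4`; in particular it is attained by the pure state
`(|λmin⟩ + |λmax⟩)/√2` built from (orthogonal) unit eigenvectors for `λmin` and `λmax`. -/
theorem max_variance_hermitian
    {n : Type*} [Fintype n] [DecidableEq n] [Nonempty n]
    (A : Matrix n n ℂ) (hA : A.IsHermitian)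
    (lmax lmin : ℝ)
    (hmax : IsGreatest (Set.range hA.eigenvalues) lmax)
    (hmin : IsLeast (Set.range hA.eigenvalues) lmin) :
    IsGreatest {x : ℝ | ∃ ρ : Matrix n n ℂ, IsDensityMatrix ρ ∧ x = varH ρ A}
        ((lmax - lmin) ^ 2 / 4) ∧
      ∀ v w : n → ℂ,
        (∑ x, Complex.normSq (v x)) = 1 → (∑ x, Complex.normSq (w x)) = 1 →
        A.mulVec v = (lmin : ℂ) • v → A.mulVec w = (lmax : ℂ) • w →
        (∑ x, (starRingEnd ℂ) (v x) * w x) = 0 →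
        varH (pureState fun x => ((Real.sqrt 2 : ℂ))⁻¹ * (v x + w x)) A =
          (lmax - lmin) ^ 2 / 4 := by
  refine ⟨⟨?_, ?_⟩, fun v w hv hw hAv hAw hvw => ?_⟩
  · obtain ⟨i, rfl⟩ := hmax.1
    obtain ⟨j, rfl⟩ := hmin.1
    obtain ⟨v, hv, hAv⟩ := exists_unit_eigenvector hA j
    obtain ⟨w, hw, hAw⟩ := exists_unit_eigenvector hA i
    exact ⟨_, isDensityMatrix_midpoint (isDensityMatrix_pureState hv)
      (isDensityMatrix_pureState hw), (varH_midpoint_pureState hv hw hAv hAw).symm⟩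
  · rintro _ ⟨ρ, hρ, rfl⟩
    have h := varH_le_mul_sub hA hρ (fun i => hmin.2 ⟨i, rfl⟩) (fun i => hmax.2 ⟨i, rfl⟩)
    nlinarith [sq_nonneg (lmax + lmin - 2 * (ρ * A).trace.re)]
  · exact varH_pureState_superposition (star_dotProduct_self_eq_one hv)
      (star_dotProduct_self_eq_one hw) hAv hAw hvw

end Paper
end
end

section
/- Let {G^a}_{a∈A} be a finite collection of operators on a nonzero finite-dimensional complex Hilbert space K, set M = ‖Σ_{a∈A} (G^a)† G^a‖_∞, and let c = (c^a)_{a∈A} be a tuple of complex numbers with Σ_{a∈A} |c^a|² > 4M. Then for every density matrix ρ on K, Σ_{a∈A} Tr[ρ (G^a − c^a·I)†(G^a − c^a·I)] > M. -/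
open scoped BigOperators Kronecker Matrix ComplexOrder

noncomputable section
namespace Paper

variable {N : ℕ} {d : Fin N → Type*} [∀ k, Fintype (d k)] [∀ k, DecidableEq (d k)]

/-- `Tr[ρ Y† Y]` has nonnegative real part for positive semidefinite `ρ`. -/
theorem trace_mul_conjTranspose_mul_self_re_nonneg {n : Type*} [Fintype n]
    {ρ : Matrix n n ℂ} (hρ : ρ.PosSemidef) (Y : Matrix n n ℂ) :
    0 ≤ (ρ * (Yᴴ * Y)).trace.re := by
  have h : 0 ≤ (Y * ρ * Yᴴ).trace := (hρ.mul_mul_conjTranspose_same Y).trace_nonneg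
  rw [← Matrix.mul_assoc, Matrix.trace_mul_comm, ← Matrix.mul_assoc]
  exact (Complex.le_def.mp h).1

open scoped MatrixOrder Matrix.Norms.L2Operator in
/-- The expectation of a Hermitian matrix in a density matrix is at most its operator norm. -/
theorem trace_mul_re_le_opNorm {n : Type*} [Fintype n] [DecidableEq n]
    {ρ S : Matrix n n ℂ} (hρ : IsDensityMatrix ρ) (hS : S.IsHermitian) :
    (ρ * S).trace.re ≤ opNorm S := by
  have hnorm : opNorm S = ‖S‖ := rfl
  have hle : S ≤ algebraMap ℝ (Matrix n n ℂ) ‖S‖ :=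
    IsSelfAdjoint.le_algebraMap_norm_self (a := S) hS
  obtain ⟨Y, hY⟩ := CStarAlgebra.nonneg_iff_eq_star_mul_self.mp (sub_nonneg.mpr hle)
  have h := trace_mul_conjTranspose_mul_self_re_nonneg hρ.1 Y
  rw [← Matrix.star_eq_conjTranspose, ← hY, Matrix.mul_sub, Matrix.trace_sub,
    Algebra.algebraMap_eq_smul_one, Matrix.mul_smul, Matrix.mul_one, Matrix.trace_smul,
    hρ.2] at h
  simpa [hnorm] using h

/-- The parallelogram identity for `X - c` and `X`, with difference `c` and sum `2 X - c`. -/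
theorem conjTranspose_mul_self_parallelogram {n : Type*} [Fintype n] [DecidableEq n]
    (X : Matrix n n ℂ) (c : ℂ) :
    (2 : ℂ) • ((X - c • (1 : Matrix n n ℂ))ᴴ * (X - c • (1 : Matrix n n ℂ))) +
        (2 : ℂ) • (Xᴴ * X) =
      ((2 : ℂ) • X - c • (1 : Matrix n n ℂ))ᴴ * ((2 : ℂ) • X - c • (1 : Matrix n n ℂ)) +
        ((‖c‖ ^ 2 : ℝ) : ℂ) • (1 : Matrix n n ℂ) := by
  have hc : ((‖c‖ ^ 2 : ℝ) : ℂ) = c * star c := by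
    simp [Complex.mul_conj, Complex.normSq_eq_norm_sq]
  rw [hc]
  simp only [Matrix.conjTranspose_sub, Matrix.conjTranspose_smul, Matrix.conjTranspose_one,
    Matrix.sub_mul, Matrix.mul_sub, Matrix.smul_mul, Matrix.mul_smul, Matrix.one_mul,
    Matrix.mul_one, star_ofNat]
  module

/-- With `M = ‖Σ_a (G^a)† G^a‖_∞`, if the tuple `c` satisfies
`Σ_a |c^a|² > 4M`, then `F(ρ, c) = Σ_a Tr[ρ (G^a − c^a·I)†(G^a − c^a·I)] > M` for every
density matrix `ρ`. -/
theorem F_gt_M_of_large_c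
    {n : Type*} [Fintype n] [DecidableEq n] [Nonempty n]
    {A : Type*} [Fintype A] (G : A → Matrix n n ℂ) (c : A → ℂ)
    (hc : 4 * opNorm (∑ a, (G a)ᴴ * G a) < ∑ a, ‖c a‖ ^ 2) :
    ∀ ρ : Matrix n n ℂ, IsDensityMatrix ρ →
      opNorm (∑ a, (G a)ᴴ * G a) <
        (∑ a, (ρ * ((G a - c a • (1 : Matrix n n ℂ))ᴴ *
          (G a - c a • (1 : Matrix n n ℂ)))).trace).re := by
  intro ρ hρ
  have hS : (∑ a, (G a)ᴴ * G a).IsHermitian := by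
    simp [Matrix.IsHermitian, Matrix.conjTranspose_sum]
  have hM := trace_mul_re_le_opNorm hρ hS
  rw [Matrix.mul_sum, Matrix.trace_sum, Complex.re_sum] at hM
  have hlower : ∀ a, ‖c a‖ ^ 2 ≤
      2 * (ρ * ((G a - c a • (1 : Matrix n n ℂ))ᴴ *
        (G a - c a • (1 : Matrix n n ℂ)))).trace.re + 2 * (ρ * ((G a)ᴴ * G a)).trace.re := by
    intro a
    have h := trace_mul_conjTranspose_mul_self_re_nonneg hρ.1
      ((2 : ℂ) • G a - c a • (1 : Matrix n n ℂ))
    have hid := congrArg (fun X => (ρ * X).trace.re)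
      (conjTranspose_mul_self_parallelogram (G a) (c a))
    simp only [Matrix.mul_add, Matrix.mul_smul, Matrix.trace_add,
      Matrix.trace_smul, hρ.2, smul_eq_mul, mul_one, Complex.add_re, Complex.ofReal_re,
      Complex.mul_re, Complex.re_ofNat, Complex.im_ofNat, zero_mul, sub_zero] at hid
    linarith
  have hsum := Finset.sum_le_sum fun a (_ : a ∈ Finset.univ) => hlower a
  rw [Finset.sum_add_distrib, ← Finset.mul_sum, ← Finset.mul_sum] at hsum
  rw [Complex.re_sum]
  linarith

end Paper
end
end

section
/- Let |t⟩ = ((|↑⟩ + |↓⟩)/√2)^{⊗N} be the coherent half-up product state of N ≥ 1 qubits and let |t'⟩ be the normalization of Σ_{k=1}^N σ₊^{(k)} |t⟩, where σ₊^{(k)} = |↑⟩⟨↓| acts on site k. Then |⟨t|t'⟩|² = N/(N+1), and consequently the trace distance between the corresponding pure states is (1/2)·‖ |t'⟩⟨t'| − |t⟩⟨t| ‖₁ = 1/√(N+1). -/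
open scoped BigOperators Kronecker Matrix ComplexOrder

noncomputable section
namespace Paper

variable {N : ℕ} {d : Fin N → Type*} [∀ k, Fintype (d k)] [∀ k, DecidableEq (d k)]

/-- The raising operator `σ₊ = |↑⟩⟨↓|` on one qubit (`true` plays the role of `|↑⟩`). -/
def sigmaPlus : Matrix Bool Bool ℂ :=
  Matrix.of fun a b => if a = true ∧ b = false then 1 else 0

/-- The coherent half-up product state `((|↑⟩ + |↓⟩)/√2)^{⊗N}` of `N` qubits:
every amplitude equals `2^{−N/2}`. -/
noncomputable def coherentHalfUp (N : ℕ) : (Fin N → Bool) → ℂ :=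
  fun _ => ((Real.sqrt 2 : ℂ))⁻¹ ^ N

section PureStates

variable {n : Type*} [Fintype n] [DecidableEq n]

/-- If `A†A` is `κ` times a projection, every nonzero singular value of `A` is `√κ`. -/
theorem traceNorm_eq_of_gram_mul_self {A : Matrix n n ℂ} {κ : ℝ}
    (h : (Aᴴ * A) * (Aᴴ * A) = (κ : ℂ) • (Aᴴ * A)) :
    traceNorm A = (Aᴴ * A).trace.re / Real.sqrt κ := by
  have hH := (Matrix.posSemidef_conjTranspose_mul_self A).1
  have hsq : ∀ i, hH.eigenvalues i * hH.eigenvalues i = κ * hH.eigenvalues i := by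
    intro i
    have hv := hH.mulVec_eigenvectorBasis i
    have hne : (hH.eigenvectorBasis i).ofLp ≠ 0 := fun h0 =>
      hH.eigenvectorBasis.orthonormal.ne_zero i (by ext j; exact congrFun h0 j)
    have h2 := congrArg (fun M => Matrix.mulVec M (hH.eigenvectorBasis i).ofLp) h
    simp only [← Matrix.mulVec_mulVec, Matrix.smul_mulVec, hv, Matrix.mulVec_smul] at h2
    obtain ⟨j, hj⟩ := Function.ne_iff.mp hne
    have h3 := congrFun h2 j
    simp only [Pi.smul_apply, Complex.real_smul, smul_eq_mul, ← mul_assoc] at h3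
    exact_mod_cast mul_right_cancel₀ hj h3
  have hsqrt : ∀ i, Real.sqrt (hH.eigenvalues i) = hH.eigenvalues i / Real.sqrt κ := by
    intro i
    rcases eq_or_ne (hH.eigenvalues i) 0 with h0 | h0
    · simp [h0]
    · rw [mul_right_cancel₀ h0 (hsq i), Real.div_sqrt]
  have htr := congrArg Complex.re hH.trace_eq_sum_eigenvalues
  rw [Complex.re_sum] at htr
  simp only [RCLike.ofReal_eq_complex_ofReal, Complex.ofReal_re] at htr
  rw [htr, Finset.sum_div]
  exact Finset.sum_congr rfl fun i _ => hsqrt i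

/-- The trace norm of the difference of two pure states in terms of their overlap. -/
theorem traceNorm_pureState_sub {u v : n → ℂ} (hu : star u ⬝ᵥ u = 1) (hv : star v ⬝ᵥ v = 1) :
    traceNorm (pureState u - pureState v) = 2 * Real.sqrt (1 - ‖star v ⬝ᵥ u‖ ^ 2) := by
  set P := pureState u with hP
  set Q := pureState v with hQ
  set s : ℂ := ((‖star v ⬝ᵥ u‖ ^ 2 : ℝ) : ℂ) with hs
  have hconj : star u ⬝ᵥ v = star (star v ⬝ᵥ u) := by
    rw [Matrix.star_dotProduct]
  have hvu : (star v ⬝ᵥ u) * (star u ⬝ᵥ v) = s := by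
    rw [hconj, hs, Complex.star_def, Complex.mul_conj, Complex.normSq_eq_norm_sq]
  have hPP : P * P = P := by
    rw [hP, pureState_eq_vecMulVec, Matrix.vecMulVec_mul_vecMulVec, hu, one_smul]
  have hQQ : Q * Q = Q := by
    rw [hQ, pureState_eq_vecMulVec, Matrix.vecMulVec_mul_vecMulVec, hv, one_smul]
  have hPQP : P * (Q * P) = s • P := by
    simp only [hP, hQ, pureState_eq_vecMulVec, Matrix.vecMulVec_mul_vecMulVec,
      Matrix.vecMulVec_smul, Matrix.mul_smul, smul_smul, hvu]
  have hQPQ : Q * (P * Q) = s • Q := by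
    simp only [hP, hQ, pureState_eq_vecMulVec, Matrix.vecMulVec_mul_vecMulVec,
      Matrix.vecMulVec_smul, Matrix.mul_smul, smul_smul]
    rw [mul_comm, hvu]
  have hPH : Pᴴ = P := by
    rw [hP, pureState_eq_vecMulVec, Matrix.conjTranspose_vecMulVec, star_star]
  have hQH : Qᴴ = Q := by
    rw [hQ, pureState_eq_vecMulVec, Matrix.conjTranspose_vecMulVec, star_star]
  have hM : (P - Q)ᴴ * (P - Q) = P + Q - P * Q - Q * P := by
    rw [Matrix.conjTranspose_sub, hPH, hQH, sub_mul, mul_sub, mul_sub, hPP, hQQ]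
    abel
  have hPM : P * (P + Q - P * Q - Q * P) = (1 - s) • P := by
    rw [mul_sub, mul_sub, mul_add, ← mul_assoc P P Q, hPP, hPQP, sub_smul, one_smul]
    abel
  have hQM : Q * (P + Q - P * Q - Q * P) = (1 - s) • Q := by
    rw [mul_sub, mul_sub, mul_add, ← mul_assoc Q Q P, hQQ, hQPQ, sub_smul, one_smul]
    abel
  have hcast : ((1 - ‖star v ⬝ᵥ u‖ ^ 2 : ℝ) : ℂ) = 1 - s := by rw [hs]; push_cast; rfl
  have hMM : (P - Q)ᴴ * (P - Q) * ((P - Q)ᴴ * (P - Q)) =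
      ((1 - ‖star v ⬝ᵥ u‖ ^ 2 : ℝ) : ℂ) • ((P - Q)ᴴ * (P - Q)) := by
    rw [hM, hcast]
    conv_lhs => rw [sub_mul, sub_mul, add_mul, mul_assoc P Q, mul_assoc Q P, hPM, hQM]
    simp only [Matrix.mul_smul, smul_sub, smul_add]
  have htrP : P.trace = 1 := by
    rw [hP, pureState_eq_vecMulVec, Matrix.trace_vecMulVec, dotProduct_comm, hu]
  have htrQ : Q.trace = 1 := by
    rw [hQ, pureState_eq_vecMulVec, Matrix.trace_vecMulVec, dotProduct_comm, hv]
  have htrPQ : (P * Q).trace = s := by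
    rw [← hPP, mul_assoc, Matrix.trace_mul_comm, mul_assoc, hPQP, Matrix.trace_smul, htrP,
      smul_eq_mul, mul_one]
  have htr : ((P - Q)ᴴ * (P - Q)).trace = ((2 * (1 - ‖star v ⬝ᵥ u‖ ^ 2) : ℝ) : ℂ) := by
    rw [hM, Matrix.trace_sub, Matrix.trace_sub, Matrix.trace_add, Matrix.trace_mul_comm Q P,
      htrP, htrQ, htrPQ, Complex.ofReal_mul, hcast]
    push_cast
    ring
  rw [traceNorm_eq_of_gram_mul_self hMM, htr, Complex.ofReal_re, mul_div_assoc, Real.div_sqrt]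

end PureStates

/-- The number of up spins in a configuration. -/
def upCount {N : ℕ} (x : Fin N → Bool) : ℝ := ∑ k, if x k then 1 else 0

theorem sum_bool_fun_succ {N : ℕ} (f : (Fin (N + 1) → Bool) → ℝ) :
    ∑ x, f x = ∑ x : Fin N → Bool, (f (Fin.cons true x) + f (Fin.cons false x)) := by
  rw [← (Fin.consEquiv fun _ => Bool).sum_comp, Fintype.sum_prod_type, Fintype.sum_bool,
    ← Finset.sum_add_distrib]
  rfl

theorem upCount_cons {N : ℕ} (b : Bool) (x : Fin N → Bool) :
    upCount (Fin.cons b x : Fin (N + 1) → Bool) = (if b then 1 else 0) + upCount x := by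
  simp only [upCount, Fin.sum_univ_succ, Fin.cons_zero, Fin.cons_succ]

theorem sum_upCount (N : ℕ) : ∑ x : Fin N → Bool, upCount x = N / 2 * 2 ^ N := by
  induction N with
  | zero => simp [upCount]
  | succ N ih =>
    rw [sum_bool_fun_succ]
    simp only [upCount_cons, Finset.sum_add_distrib, ih]
    simp
    ring

theorem sum_upCount_sq (N : ℕ) :
    ∑ x : Fin N → Bool, upCount x ^ 2 = N * (N + 1) / 4 * 2 ^ N := by
  induction N with
  | zero => simp [upCount]
  | succ N ih =>
    rw [sum_bool_fun_succ]
    simp only [upCount_cons, add_sq, Finset.sum_add_distrib, ih, ← Finset.mul_sum, sum_upCount]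
    simp
    ring

theorem extendAt_sigmaPlus_mulVec_const {N : ℕ} (k : Fin N) (c : ℂ) (x : Fin N → Bool) :
    (extendAt (d := fun _ : Fin N => Bool) k sigmaPlus).mulVec (fun _ => c) x =
      if x k then c else 0 := by
  rw [Matrix.mulVec, dotProduct, Finset.sum_eq_single (Function.update x k false)]
  · have : ∀ j, j ≠ k → x j = Function.update x k false j := fun j hj => by
      rw [Function.update_of_ne hj]
    simp [extendAt, sigmaPlus, if_pos this]
  · intro y _ hy
    simp only [extendAt, sigmaPlus, Matrix.of_apply]
    split_ifs with h1 h2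
    · refine absurd (funext fun j => ?_) hy
      rcases eq_or_ne j k with rfl | hj
      · simp [h2.2]
      · rw [Function.update_of_ne hj, h1 j hj]
    all_goals simp
  · simp

theorem sum_extendAt_sigmaPlus_mulVec_coherentHalfUp {N : ℕ} (x : Fin N → Bool) :
    (∑ k, extendAt (d := fun _ : Fin N => Bool) k sigmaPlus).mulVec (coherentHalfUp N) x =
      (((Real.sqrt 2)⁻¹ ^ N * upCount x : ℝ) : ℂ) := by
  rw [Matrix.sum_mulVec, Finset.sum_apply]
  unfold coherentHalfUp
  simp only [extendAt_sigmaPlus_mulVec_const, upCount]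
  push_cast
  rw [Finset.mul_sum]
  refine Finset.sum_congr rfl fun k _ => ?_
  split_ifs <;> simp

theorem inv_sqrt_two_pow_sq_mul (N : ℕ) : ((Real.sqrt 2)⁻¹ ^ N) ^ 2 * 2 ^ N = 1 := by
  rw [← pow_mul, mul_comm N 2, pow_mul, inv_pow, Real.sq_sqrt (by norm_num), ← mul_pow]
  norm_num


/-- Let `|t⟩ = ((|↑⟩+|↓⟩)/√2)^{⊗N}` (`N ≥ 1`) and let `|t'⟩` be the
normalization of `Σ_k σ₊^{(k)} |t⟩`. Then `|⟨t|t'⟩|² = N/(N+1)`, and the trace distance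
between the corresponding pure states is `(1/2)·‖|t'⟩⟨t'| − |t⟩⟨t|‖₁ = 1/√(N+1)`. -/
theorem raised_coherent_overlap_and_trace_distance
    {N : ℕ} (hN : 1 ≤ N)
    (w : (Fin N → Bool) → ℂ)
    (hw : w = (∑ k, extendAt (d := fun _ : Fin N => Bool) k sigmaPlus).mulVec
      (coherentHalfUp N))
    (t' : (Fin N → Bool) → ℂ)
    (ht' : t' = fun x => ((Real.sqrt (∑ y, Complex.normSq (w y)) : ℂ))⁻¹ * w x) :
    ‖∑ x, (starRingEnd ℂ) (coherentHalfUp N x) * t' x‖ ^ 2 =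
        (N : ℝ) / ((N : ℝ) + 1) ∧
      (1 / 2 : ℝ) * traceNorm (pureState t' - pureState (coherentHalfUp N)) =
        1 / Real.sqrt ((N : ℝ) + 1) := by
  set c : ℝ := (Real.sqrt 2)⁻¹ ^ N with hc
  have hcN : c ^ 2 * 2 ^ N = 1 := inv_sqrt_two_pow_sq_mul N
  have hNpos : (0 : ℝ) < N := by exact_mod_cast hN
  have hwx : ∀ x, w x = ((c * upCount x : ℝ) : ℂ) := fun x => by
    rw [hw, sum_extendAt_sigmaPlus_mulVec_coherentHalfUp]
  have htx : ∀ x, coherentHalfUp N x = (c : ℂ) := fun x => by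
    simp [coherentHalfUp, hc]
  have hnorm : ∑ y, Complex.normSq (w y) = N * (N + 1) / 4 := by
    simp only [hwx, Complex.normSq_ofReal]
    calc ∑ y : Fin N → Bool, c * upCount y * (c * upCount y)
        = c ^ 2 * ∑ y : Fin N → Bool, upCount y ^ 2 := by
          rw [Finset.mul_sum]; exact Finset.sum_congr rfl fun y _ => by ring
      _ = N * (N + 1) / 4 := by rw [sum_upCount_sq]; linear_combination N * (N + 1) / 4 * hcN
  set r : ℝ := Real.sqrt (∑ y, Complex.normSq (w y)) with hr
  have hr2 : r ^ 2 = N * (N + 1) / 4 := by rw [hr, hnorm, Real.sq_sqrt (by positivity)]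
  have hr0 : r ≠ 0 := fun h => by rw [h] at hr2; nlinarith
  have ht'x : ∀ x, t' x = ((r⁻¹ * (c * upCount x) : ℝ) : ℂ) := fun x => by
    rw [ht']; simp only [hwx]; push_cast; rfl
  have hover : ∑ x, (starRingEnd ℂ) (coherentHalfUp N x) * t' x = ((r⁻¹ * (N / 2) : ℝ) : ℂ) := by
    simp only [htx, ht'x, Complex.conj_ofReal, ← Complex.ofReal_mul, ← Complex.ofReal_sum]
    congr 1
    calc ∑ x : Fin N → Bool, c * (r⁻¹ * (c * upCount x))
        = r⁻¹ * c ^ 2 * ∑ x : Fin N → Bool, upCount x := by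
          rw [Finset.mul_sum]; exact Finset.sum_congr rfl fun y _ => by ring
      _ = r⁻¹ * (N / 2) := by rw [sum_upCount]; linear_combination r⁻¹ * (N / 2) * hcN
  have hfid : ‖∑ x, (starRingEnd ℂ) (coherentHalfUp N x) * t' x‖ ^ 2 =
      (N : ℝ) / ((N : ℝ) + 1) := by
    rw [hover, Complex.norm_real, Real.norm_eq_abs, sq_abs, mul_pow, inv_pow, hr2]
    field_simp
    norm_num
  refine ⟨hfid, ?_⟩
  have hut : star (coherentHalfUp N) ⬝ᵥ coherentHalfUp N = 1 := by
    simp only [dotProduct, Pi.star_apply, htx, Complex.star_def, Complex.conj_ofReal,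
      ← Complex.ofReal_mul, ← Complex.ofReal_sum]
    rw [← Complex.ofReal_one]
    congr 1
    simp
    linear_combination hcN
  have hut' : star t' ⬝ᵥ t' = 1 := by
    simp only [dotProduct, Pi.star_apply, ht'x, Complex.star_def, Complex.conj_ofReal,
      ← Complex.ofReal_mul, ← Complex.ofReal_sum]
    rw [← Complex.ofReal_one]
    congr 1
    calc ∑ x : Fin N → Bool, r⁻¹ * (c * upCount x) * (r⁻¹ * (c * upCount x))
        = (r ^ 2)⁻¹ * (c ^ 2 * ∑ x : Fin N → Bool, upCount x ^ 2) := by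
          rw [Finset.mul_sum, Finset.mul_sum]
          exact Finset.sum_congr rfl fun y _ => by ring
      _ = (r ^ 2)⁻¹ * r ^ 2 := by
          rw [sum_upCount_sq, hr2]
          linear_combination (N * (N + 1) / 4 : ℝ)⁻¹ * (N * (N + 1) / 4) * hcN
      _ = 1 := inv_mul_cancel₀ (pow_ne_zero 2 hr0)
  have hdot : ‖star (coherentHalfUp N) ⬝ᵥ t'‖ ^ 2 = (N : ℝ) / ((N : ℝ) + 1) := hfid
  have hone : 1 - (N : ℝ) / ((N : ℝ) + 1) = 1 / ((N : ℝ) + 1) := by field_simp; ring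
  rw [traceNorm_pureState_sub hut' hut, hdot, hone,
    Real.sqrt_div zero_le_one, Real.sqrt_one]
  ring

end Paper
end
end
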